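/- arXiv:2002.11961 — 2 statements merged into one kernel-verified Lean document; each statement's English description precedes it below -/
import Mathlib

section
/- Let X be a real Banach space and let E be a closed subspace of X that is reflexive (as a Banach space in its own right). Then E is simultaneously approximatively weakly compact in X. -/
/-!
In a reflexive space, the closed convex hull `K` of a bounded sequence is weakly closed
(Hahn–Banach), hence weakly compact (Banach–Alaoglu in the bidual). As `K` is norm separable,
norming functionals of a dense sequence in `K - K` separate the points of `K`, so the weak topology
of `K` is metrizable and the sequence has a subsequence converging weakly to a point of `K`. A
minimizing sequence for a nonempty bounded set is bounded, so this applies to it.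
-/

open Filter Topology Pointwise

variable {X : Type*} [NormedAddCommGroup X] [NormedSpace ℝ X]

/-- `simSup A y = sup_{a ∈ A} ‖a - y‖`. -/
noncomputable def simSup (A : Set X) (y : X) : ℝ := ⨆ a : A, ‖(a : X) - y‖

/-- `simDist A C = inf_{y ∈ C} sup_{a ∈ A} ‖a - y‖`. -/
noncomputable def simDist (A C : Set X) : ℝ := ⨅ y : C, simSup A (y : X)

/-- The set of best simultaneous approximations `P_C(A)`. -/
def simBest (A C : Set X) : Set X := {y | y ∈ C ∧ simSup A y = simDist A C}

/-- The set `P_C(A, δ)`. -/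
def simBestApprox (A C : Set X) (δ : ℝ) : Set X :=
  {y | y ∈ C ∧ simSup A y < simDist A C + δ}

/-- `C` is simultaneously proximinal. -/
def SimProximinal (C : Set X) : Prop :=
  ∀ A : Set X, A.Nonempty → Bornology.IsBounded A → (simBest A C).Nonempty

/-- `y` is a minimizing sequence in `C` for `A`. -/
def IsMinimizing (A C : Set X) (y : ℕ → X) : Prop :=
  (∀ n, y n ∈ C) ∧ Tendsto (fun n => simSup A (y n)) atTop (𝓝 (simDist A C))

/-- Weak convergence of a sequence. -/
def WeakTendsto (y : ℕ → X) (c : X) : Prop :=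
  ∀ f : X →L[ℝ] ℝ, Tendsto (fun n => f (y n)) atTop (𝓝 (f c))

/-- `C` is simultaneously approximatively compact. -/
def SimApproxCompact (C : Set X) : Prop :=
  ∀ A : Set X, A.Nonempty → Bornology.IsBounded A → ∀ y : ℕ → X, IsMinimizing A C y →
    ∃ c ∈ C, ∃ φ : ℕ → ℕ, StrictMono φ ∧ Tendsto (y ∘ φ) atTop (𝓝 c)

/-- `C` is simultaneously approximatively weakly compact. -/
def SimApproxWeakCompact (C : Set X) : Prop :=
  ∀ A : Set X, A.Nonempty → Bornology.IsBounded A → ∀ y : ℕ → X, IsMinimizing A C y →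
    ∃ c ∈ C, ∃ φ : ℕ → ℕ, StrictMono φ ∧ WeakTendsto (y ∘ φ) c

/-- `C` is simultaneously strongly proximinal. -/
def SimStronglyProximinal (C : Set X) : Prop :=
  SimProximinal C ∧ ∀ A : Set X, A.Nonempty → Bornology.IsBounded A → ∀ ε > (0 : ℝ),
    ∃ δ > (0 : ℝ), simBestApprox A C δ ⊆ simBest A C + Metric.closedBall (0 : X) ε

/-- `C` is simultaneously weakly strongly proximinal. -/
def SimWeakStronglyProximinal (C : Set X) : Prop :=
  SimProximinal C ∧ ∀ A : Set X, A.Nonempty → Bornology.IsBounded A →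
    ∀ V : Set X, V ∈ 𝓝 (0 : WeakSpace ℝ X) → ∃ δ > (0 : ℝ),
      simBestApprox A C δ ⊆ simBest A C + V

section WeakCompactness

variable {𝕜 V : Type*} [RCLike 𝕜] [NormedAddCommGroup V] [NormedSpace 𝕜 V]

lemma exists_seq_strongDual_eq_zero_of_forall_apply_eq_zero {s : Set V}
    (hs : TopologicalSpace.IsSeparable s) :
    ∃ g : ℕ → StrongDual 𝕜 V, ∀ z ∈ s, (∀ k, g k z = 0) → z = 0 := by
  obtain ⟨c, hc, hsc⟩ := hs
  obtain ⟨d, hd⟩ := Set.countable_iff_exists_subset_range.mp hc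
  choose g hg_norm hg_apply using fun k ↦ exists_dual_vector'' 𝕜 (d k)
  refine ⟨g, fun z hz hgz ↦ ?_⟩
  have norm_le_norm_sub : c ⊆ {x | ‖x‖ ≤ ‖x - z‖} := fun x hx ↦ by
    obtain ⟨k, rfl⟩ := hd hx
    calc ‖d k‖ = ‖g k (d k - z)‖ := by simp [hgz, hg_apply]
      _ ≤ 1 * ‖d k - z‖ := (g k).le_of_opNorm_le (hg_norm k) _
      _ = ‖d k - z‖ := one_mul _
  have hz_norm : ‖z‖ ≤ ‖z - z‖ :=
    closure_minimal norm_le_norm_sub (isClosed_le (by fun_prop) (by fun_prop)) (hsc hz)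
  simpa using hz_norm

lemma exists_seq_strongDual_separating {s : Set V} (hs : TopologicalSpace.IsSeparable s) :
    ∃ g : ℕ → StrongDual 𝕜 V, ∀ x ∈ s, ∀ y ∈ s, x ≠ y → ∃ k, g k x ≠ g k y := by
  obtain ⟨g, hg⟩ := exists_seq_strongDual_eq_zero_of_forall_apply_eq_zero (𝕜 := 𝕜)
    ((hs.prod hs).image continuous_sub)
  refine ⟨g, fun x hx y hy hxy ↦ ?_⟩
  contrapose! hxy
  exact sub_eq_zero.mp <|
    hg (x - y) ⟨(x, y), ⟨hx, hy⟩, rfl⟩ fun k ↦ by rw [map_sub, hxy k, sub_self]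

lemma continuous_apply_toWeakSpace_symm (f : StrongDual 𝕜 V) :
    Continuous fun x : WeakSpace 𝕜 V ↦ f ((toWeakSpace 𝕜 V).symm x) :=
  WeakBilin.eval_continuous _ f

lemma metrizableSpace_toWeakSpace_image {s : Set V} (hs : TopologicalSpace.IsSeparable s)
    (hs_compact : IsCompact (toWeakSpace 𝕜 V '' s)) :
    TopologicalSpace.MetrizableSpace (toWeakSpace 𝕜 V '' s) := by
  have : CompactSpace (toWeakSpace 𝕜 V '' s) := isCompact_iff_compactSpace.mp hs_compact
  obtain ⟨g, hg⟩ := exists_seq_strongDual_separating (𝕜 := 𝕜) hs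
  refine Metric.PiNatEmbed.TopologicalSpace.MetrizableSpace.of_countable_separating
    (fun k (x : toWeakSpace 𝕜 V '' s) ↦ g k ((toWeakSpace 𝕜 V).symm x))
    (fun k ↦ (continuous_apply_toWeakSpace_symm (g k)).comp continuous_subtype_val) ?_
  rintro ⟨_, x, hx, rfl⟩ ⟨_, y, hy, rfl⟩ hxy
  exact hg x hx y hy fun h ↦ hxy (by simp [h])

lemma isSeqCompact_toWeakSpace_image {s : Set V} (hs : TopologicalSpace.IsSeparable s)
    (hs_compact : IsCompact (toWeakSpace 𝕜 V '' s)) :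
    IsSeqCompact (toWeakSpace 𝕜 V '' s) := by
  have : CompactSpace (toWeakSpace 𝕜 V '' s) := isCompact_iff_compactSpace.mp hs_compact
  have : TopologicalSpace.MetrizableSpace (toWeakSpace 𝕜 V '' s) :=
    metrizableSpace_toWeakSpace_image hs hs_compact
  exact isSeqCompact_iff_seqCompactSpace.mpr inferInstance

lemma isCompact_toWeakSpace_image_of_reflexive [NormedSpace ℝ V] [IsScalarTower ℝ 𝕜 V]
    (hrefl : Function.Surjective (NormedSpace.inclusionInDoubleDual 𝕜 V)) {s : Set V}
    (hs_convex : Convex ℝ s) (hs_closed : IsClosed s) (hs_bounded : Bornology.IsBounded s) :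
    IsCompact (toWeakSpace 𝕜 V '' s) := by
  have hs_weaklyClosed : closure (toWeakSpace 𝕜 V '' s) = toWeakSpace 𝕜 V '' s := by
    rw [← hs_convex.toWeakSpace_closure 𝕜, hs_closed.closure_eq]
  have hsurj : Function.Surjective (NormedSpace.inclusionInDoubleDualWeak 𝕜 V) := hrefl
  rw [← hs_weaklyClosed]
  refine NormedSpace.isCompact_closure_of_isBounded 𝕜 V _ ?_ (by simp [hsurj.range_eq])
  rwa [Set.preimage_image_eq _ (toWeakSpace 𝕜 V).injective]

end WeakCompactness

lemma isSeparable_closedConvexHull {W : Type*} [AddCommGroup W] [Module ℝ W] [TopologicalSpace W]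
    [IsTopologicalAddGroup W] [ContinuousSMul ℝ W] {s : Set W}
    (hs : TopologicalSpace.IsSeparable s) :
    TopologicalSpace.IsSeparable (closedConvexHull ℝ s) := by
  rw [closedConvexHull_eq_closure_convexHull]
  exact ((hs.span (R := ℝ)).mono <|
    convexHull_min Submodule.subset_span (Submodule.convex _)).closure

theorem exists_weakTendsto_subseq_of_reflexive
    (hrefl : Function.Surjective (NormedSpace.inclusionInDoubleDual ℝ X)) {y : ℕ → X}
    (hy : Bornology.IsBounded (Set.range y)) :
    ∃ c ∈ closedConvexHull ℝ (Set.range y),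
      ∃ φ : ℕ → ℕ, StrictMono φ ∧ WeakTendsto (y ∘ φ) c := by
  have hK_bounded : Bornology.IsBounded (closedConvexHull ℝ (Set.range y)) := by
    rw [closedConvexHull_eq_closure_convexHull]
    exact (isBounded_convexHull.mpr hy).closure
  have hK_compact : IsCompact (toWeakSpace ℝ X '' closedConvexHull ℝ (Set.range y)) :=
    isCompact_toWeakSpace_image_of_reflexive hrefl convex_closedConvexHull
      isClosed_closedConvexHull hK_bounded
  have hK_separable : TopologicalSpace.IsSeparable (closedConvexHull ℝ (Set.range y)) :=
    isSeparable_closedConvexHull (Set.countable_range y).isSeparable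
  obtain ⟨_, ⟨c, hc, rfl⟩, φ, hφ, hlim⟩ :=
    isSeqCompact_toWeakSpace_image hK_separable hK_compact
      fun n ↦ Set.mem_image_of_mem _ (subset_closedConvexHull (Set.mem_range_self n))
  exact ⟨c, hc, φ, hφ, fun f ↦ ((continuous_apply_toWeakSpace_symm f).tendsto _).comp hlim⟩

lemma WeakTendsto.map {Y : Type*} [NormedAddCommGroup Y] [NormedSpace ℝ Y] {y : ℕ → X} {c : X}
    (h : WeakTendsto y c) (T : X →L[ℝ] Y) : WeakTendsto (T ∘ y) (T c) :=
  fun f ↦ h (f.comp T)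

lemma norm_sub_le_simSup {W : Type*} [NormedAddCommGroup W] {A : Set W}
    (hA : Bornology.IsBounded A) {a : W} (ha : a ∈ A) (y : W) : ‖a - y‖ ≤ simSup A y := by
  obtain ⟨R, hR⟩ := hA.exists_norm_le
  refine le_ciSup (f := fun a : A ↦ ‖(a : W) - y‖) ⟨R + ‖y‖, ?_⟩ ⟨a, ha⟩
  rintro _ ⟨b, rfl⟩
  exact norm_sub_le_of_le (hR b b.2) le_rfl

lemma IsMinimizing.isBounded_range {W : Type*} [NormedAddCommGroup W] {A C : Set W} {y : ℕ → W}
    (hy : IsMinimizing A C y) (hA_nonempty : A.Nonempty) (hA : Bornology.IsBounded A) :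
    Bornology.IsBounded (Set.range y) := by
  obtain ⟨a, ha⟩ := hA_nonempty
  obtain ⟨M, hM⟩ := hy.2.bddAbove_range
  refine (Metric.isBounded_closedBall (x := a) (r := M)).subset ?_
  rintro _ ⟨n, rfl⟩
  rw [mem_closedBall_iff_norm']
  exact (norm_sub_le_simSup hA ha (y n)).trans (hM ⟨n, rfl⟩)

theorem reflexive_subspace_simApproxWeakCompact_general {E : Subspace ℝ X}
    (hrefl : Function.Surjective (NormedSpace.inclusionInDoubleDual ℝ E)) {C : Set X}
    (hC_convex : Convex ℝ C) (hC_closed : IsClosed C) (hCE : C ⊆ E) :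
    SimApproxWeakCompact C := by
  intro A hA_nonempty hA y hy
  obtain ⟨u, rfl⟩ : ∃ u : ℕ → E, Subtype.val ∘ u = y :=
    ⟨fun n ↦ ⟨y n, hCE (hy.1 n)⟩, rfl⟩
  have hu_bounded : Bornology.IsBounded (Set.range u) := by
    rw [← Bornology.isBounded_image_subtype_val, ← Set.range_comp]
    exact hy.isBounded_range hA_nonempty hA
  obtain ⟨c, hc, φ, hφ, hlim⟩ := exists_weakTendsto_subseq_of_reflexive hrefl hu_bounded
  have hull_subset : closedConvexHull ℝ (Set.range u) ⊆ E.subtypeL ⁻¹' C :=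
    closedConvexHull_min (Set.range_subset_iff.mpr hy.1)
      (hC_convex.linear_preimage E.subtype) (hC_closed.preimage E.subtypeL.continuous)
  exact ⟨c, hull_subset hc, φ, hφ, hlim.map E.subtypeL⟩

/-- A closed reflexive subspace of a Banach space is simultaneously approximatively
weakly compact. -/
theorem reflexive_subspace_simApproxWeakCompact [CompleteSpace X]
    (E : Subspace ℝ X) (hE : IsClosed (E : Set X))
    (hrefl : Function.Surjective (NormedSpace.inclusionInDoubleDual ℝ E)) :
    SimApproxWeakCompact (E : Set X) := by
  exact reflexive_subspace_simApproxWeakCompact_general hrefl E.convex hE subset_rfl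
end

section
/- Let X be a real Banach space, let C ⊆ X be a nonempty weakly closed set, and let A ⊆ X be a nonempty bounded set. Suppose that every minimizing sequence in C for A has a subsequence converging weakly to an element of C. Then: (i) P_C(A) is nonempty and weakly sequentially compact (every sequence in P_C(A) has a subsequence converging weakly to an element of P_C(A)); and (ii) for every neighbourhood V of 0 in the weak topology of X there exists δ > 0 such that P_C(A,δ) ⊆ P_C(A) + V. -/
/-!
The sublevel set `{y | simSup A y ≤ r}` is the intersection of the closed balls of radius `r`
centred at the points of `A`, hence closed and convex, hence weakly closed (Mazur). So `simSup A`
is weakly sequentially lower semicontinuous, and a weak limit in `C` of a minimizing sequence is a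
best simultaneous approximation. If no `δ` worked for `V`, points of `P_C(A, δ n)` outside
`P_C(A) + V` with `δ n → 0` would form a minimizing sequence, some subsequence of which converges
weakly to a `c ∈ P_C(A)` and hence eventually enters `c + V`.
-/

open Filter Topology Pointwise

variable {X : Type*} [NormedAddCommGroup X] [NormedSpace ℝ X]

section NormedGroup

variable {E : Type*} [NormedAddCommGroup E] {A C : Set E} {y : ℕ → E}

lemma simSup_le_iff (hAne : A.Nonempty) (hAb : Bornology.IsBounded A) {x : E} {r : ℝ} :
    simSup A x ≤ r ↔ ∀ a ∈ A, ‖a - x‖ ≤ r := by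
  have hbdd : BddAbove ((fun a => ‖a - x‖) '' A) := by
    simpa only [dist_eq_norm] using ((LipschitzWith.dist_left x).isBounded_image hAb).bddAbove
  exact ciSup_set_le_iff hAne hbdd

lemma setOf_simSup_le_eq_biInter_closedBall (hAne : A.Nonempty) (hAb : Bornology.IsBounded A)
    (r : ℝ) : {x | simSup A x ≤ r} = ⋂ a ∈ A, Metric.closedBall a r := by
  ext x
  simp only [Set.mem_ofPred_eq, simSup_le_iff hAne hAb, Set.mem_iInter, mem_closedBall_iff_norm']

lemma bddBelow_range_simSup (A C : Set E) : BddBelow (Set.range fun x : C => simSup A (x : E)) :=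
  ⟨0, Set.forall_mem_range.2 fun _ => Real.iSup_nonneg fun _ => norm_nonneg _⟩

lemma simDist_le_simSup (A : Set E) {x : E} (hx : x ∈ C) : simDist A C ≤ simSup A x :=
  ciInf_le (bddBelow_range_simSup A C) ⟨x, hx⟩

lemma exists_isMinimizing (A : Set E) (hC : C.Nonempty) : ∃ y, IsMinimizing A C y := by
  have : Nonempty C := hC.to_subtype
  obtain ⟨u, -, hu, hmem⟩ :=
    exists_seq_tendsto_sInf (Set.range_nonempty _) (bddBelow_range_simSup A C)
  choose y hy using hmem
  exact ⟨fun n => y n, fun n => (y n).2, hu.congr fun n => (hy n).symm⟩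

lemma isMinimizing_of_mem_simBest (hy : ∀ n, y n ∈ simBest A C) : IsMinimizing A C y :=
  ⟨fun n => (hy n).1, by simpa only [(hy _).2] using tendsto_const_nhds⟩

lemma isMinimizing_of_mem_simBestApprox {δ : ℕ → ℝ} (hδ : Tendsto δ atTop (𝓝 0))
    (hy : ∀ n, y n ∈ simBestApprox A C (δ n)) : IsMinimizing A C y := by
  have hupper : Tendsto (fun n => simDist A C + δ n) atTop (𝓝 (simDist A C)) := by
    simpa only [add_zero] using hδ.const_add (simDist A C)
  exact ⟨fun n => (hy n).1, tendsto_of_tendsto_of_tendsto_of_le_of_le tendsto_const_nhds hupper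
    (fun n => simDist_le_simSup A (hy n).1) fun n => (hy n).2.le⟩

lemma IsMinimizing.comp_strictMono (hy : IsMinimizing A C y) {φ : ℕ → ℕ} (hφ : StrictMono φ) :
    IsMinimizing A C (y ∘ φ) :=
  ⟨fun n => hy.1 (φ n), hy.2.comp hφ.tendsto_atTop⟩

end NormedGroup

section WeakConvergence

variable {A C : Set X} {y : ℕ → X} {c : X}

lemma weakTendsto_iff_tendsto_toWeakSpace :
    WeakTendsto y c ↔
      Tendsto (fun n => toWeakSpace ℝ X (y n)) atTop (𝓝 (toWeakSpace ℝ X c)) := by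
  have hinj : Function.Injective (topDualPairing ℝ X).flip := fun x₁ x₂ hx =>
    (SeparatingDual.eq_iff_forall_dual_eq (R := ℝ)).2 fun f => LinearMap.congr_fun hx f
  exact (WeakBilin.tendsto_iff_forall_eval_tendsto _ hinj).symm

lemma WeakTendsto.mem_of_convex_of_isClosed (hy : WeakTendsto y c) {K : Set X}
    (hK : Convex ℝ K) (hKc : IsClosed K) (hyK : ∀ᶠ n in atTop, y n ∈ K) : c ∈ K := by
  have hweak : IsClosed (toWeakSpace ℝ X '' K) := by
    rw [← closure_eq_iff_isClosed, ← hK.toWeakSpace_closure ℝ, hKc.closure_eq]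
  have hmem : toWeakSpace ℝ X c ∈ toWeakSpace ℝ X '' K :=
    hweak.mem_of_tendsto (weakTendsto_iff_tendsto_toWeakSpace.1 hy)
      (hyK.mono fun _ hn => Set.mem_image_of_mem _ hn)
  exact (toWeakSpace ℝ X).injective.mem_set_image.1 hmem

lemma WeakTendsto.eventually_sub_mem (hy : WeakTendsto y c) {V : Set X}
    (hV : V ∈ 𝓝 (0 : WeakSpace ℝ X)) : ∀ᶠ n in atTop, y n - c ∈ V :=
  (tendsto_sub_nhds_zero_iff.2 (weakTendsto_iff_tendsto_toWeakSpace.1 hy)).eventually_mem hV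

lemma WeakTendsto.simSup_le_of_tendsto (hy : WeakTendsto y c) (hAne : A.Nonempty)
    (hAb : Bornology.IsBounded A) {d : ℝ}
    (hd : Tendsto (fun n => simSup A (y n)) atTop (𝓝 d)) : simSup A c ≤ d := by
  refine le_of_forall_gt_imp_ge_of_dense fun r hr => ?_
  have hsub := setOf_simSup_le_eq_biInter_closedBall hAne hAb r
  have hconvex : Convex ℝ {x | simSup A x ≤ r} :=
    hsub ▸ convex_iInter₂ fun a _ => convex_closedBall a r
  have hclosed : IsClosed {x | simSup A x ≤ r} :=
    hsub ▸ isClosed_biInter fun _ _ => Metric.isClosed_closedBall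
  exact hy.mem_of_convex_of_isClosed hconvex hclosed (hd.eventually_le_const hr)

lemma IsMinimizing.mem_simBest_of_weakTendsto (hy : IsMinimizing A C y) (hAne : A.Nonempty)
    (hAb : Bornology.IsBounded A) (hc : c ∈ C) (hyc : WeakTendsto y c) : c ∈ simBest A C :=
  ⟨hc, (hyc.simSup_le_of_tendsto hAne hAb hy.2).antisymm (simDist_le_simSup A hc)⟩

lemma exists_simBestApprox_subset_add {S V : Set X} (hV : V ∈ 𝓝 (0 : WeakSpace ℝ X))
    (hS : ∀ y : ℕ → X, IsMinimizing A C y →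
      ∃ c ∈ S, ∃ φ : ℕ → ℕ, StrictMono φ ∧ WeakTendsto (y ∘ φ) c) :
    ∃ δ > (0 : ℝ), simBestApprox A C δ ⊆ S + V := by
  by_contra! hnot
  obtain ⟨δ, -, hδpos, hδ⟩ := exists_seq_strictAnti_tendsto (0 : ℝ)
  choose y hy hyV using fun n => Set.not_subset.1 (hnot (δ n) (hδpos n))
  obtain ⟨c, hc, φ, -, hφc⟩ := hS y (isMinimizing_of_mem_simBestApprox hδ hy)
  obtain ⟨n, hn⟩ := (hφc.eventually_sub_mem hV).exists
  exact hyV (φ n) (Set.mem_add.2 ⟨c, hc, y (φ n) - c, hn, add_sub_cancel _ _⟩)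

end WeakConvergence

theorem simApproxWeakCompact_for_set_implies_general
    (C : Set X) (hCne : C.Nonempty)
    (A : Set X) (hAne : A.Nonempty) (hAb : Bornology.IsBounded A)
    (h : ∀ y : ℕ → X, IsMinimizing A C y →
      ∃ c ∈ C, ∃ φ : ℕ → ℕ, StrictMono φ ∧ WeakTendsto (y ∘ φ) c) :
    (simBest A C).Nonempty ∧
    (∀ y : ℕ → X, (∀ n, y n ∈ simBest A C) →
      ∃ c ∈ simBest A C, ∃ φ : ℕ → ℕ, StrictMono φ ∧ WeakTendsto (y ∘ φ) c) ∧
    (∀ V : Set X, V ∈ 𝓝 (0 : WeakSpace ℝ X) → ∃ δ > (0 : ℝ),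
      simBestApprox A C δ ⊆ simBest A C + V) := by
  have hbest : ∀ y : ℕ → X, IsMinimizing A C y →
      ∃ c ∈ simBest A C, ∃ φ : ℕ → ℕ, StrictMono φ ∧ WeakTendsto (y ∘ φ) c := fun y hy => by
    obtain ⟨c, hc, φ, hφ, hφc⟩ := h y hy
    exact ⟨c, (hy.comp_strictMono hφ).mem_simBest_of_weakTendsto hAne hAb hc hφc, φ, hφ, hφc⟩
  refine ⟨?_, fun y hy => hbest y (isMinimizing_of_mem_simBest hy),
    fun V hV => exists_simBestApprox_subset_add hV hbest⟩
  obtain ⟨y, hy⟩ := exists_isMinimizing A hCne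
  obtain ⟨c, hc, -⟩ := hbest y hy
  exact ⟨c, hc⟩

/-- If `C` is weakly closed and simultaneously approximatively weakly compact for a bounded
set `A`, then `C` is simultaneously weakly strongly proximinal for `A` and `P_C(A)` is weakly
sequentially compact. -/
theorem simApproxWeakCompact_for_set_implies [CompleteSpace X]
    (C : Set X) (hCne : C.Nonempty)
    (hC : IsClosed (show Set (WeakSpace ℝ X) from C))
    (A : Set X) (hAne : A.Nonempty) (hAb : Bornology.IsBounded A)
    (h : ∀ y : ℕ → X, IsMinimizing A C y →
      ∃ c ∈ C, ∃ φ : ℕ → ℕ, StrictMono φ ∧ WeakTendsto (y ∘ φ) c) :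
    (simBest A C).Nonempty ∧
    (∀ y : ℕ → X, (∀ n, y n ∈ simBest A C) →
      ∃ c ∈ simBest A C, ∃ φ : ℕ → ℕ, StrictMono φ ∧ WeakTendsto (y ∘ φ) c) ∧
    (∀ V : Set X, V ∈ 𝓝 (0 : WeakSpace ℝ X) → ∃ δ > (0 : ℝ),
      simBestApprox A C δ ⊆ simBest A C + V) :=
  simApproxWeakCompact_for_set_implies_general C hCne A hAne hAb h
end
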